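/- arXiv:cs/0309018 — 4 statements merged into one kernel-verified Lean document; each statement's English description precedes it below -/
import Mathlib

section
/- (Chaotic iteration theorem underlying the Generic Propagation Algorithm.) Let L be a partial order in which < is well-founded, and let f : ι → L → L be a family of operators each of which is monotone and contracting (f i y ≤ y for all y). Let s : ℕ → ι be a fair schedule and x the run of f along s from x₀. Then there exists N such that: x n = x N for all n ≥ N; x N ≤ x₀; f i (x N) = x N for all i; and x N is the greatest common fixpoint below the start, i.e., every y ∈ L with y ≤ x₀ and f i y = y for all i satisfies y ≤ x N. -/
/-!
The run decreases because the operators are contracting, so well-foundedness makes it stationary.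
Fairness means every operator is applied to the stationary value, which is therefore a common
fixpoint; monotonicity keeps every common fixpoint below `x₀` under each term of the run.
-/

/-- Chaotic iteration theorem underlying the Generic Propagation Algorithm:
with `<` well-founded on `L`, monotone and contracting operators `f i`, and a
fair schedule `s`, the run of `f` along `s` from `x₀` stabilizes at the
greatest common fixpoint of the family below `x₀`. -/
theorem chaotic_iteration {L : Type*} [PartialOrder L] {ι : Type*}
    (hwf : WellFounded ((· < ·) : L → L → Prop))
    (f : ι → L → L) (hmono : ∀ i, Monotone (f i))
    (hcontract : ∀ i, ∀ y : L, f i y ≤ y)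
    (s : ℕ → ι) (hfair : ∀ i : ι, ∀ N : ℕ, ∃ n : ℕ, N ≤ n ∧ s n = i)
    (x₀ : L) (x : ℕ → L)
    (hx0 : x 0 = x₀) (hxs : ∀ n, x (n + 1) = f (s n) (x n)) :
    ∃ N : ℕ,
      (∀ n : ℕ, N ≤ n → x n = x N) ∧
      x N ≤ x₀ ∧
      (∀ i : ι, f i (x N) = x N) ∧
      (∀ y : L, y ≤ x₀ → (∀ i : ι, f i y = y) → y ≤ x N) := by
  have hanti : Antitone x := antitone_nat_of_succ_le fun n => by
    rw [hxs]
    exact hcontract _ _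
  -- A minimal element of the range of the decreasing run is its eventual value.
  obtain ⟨_, ⟨N, rfl⟩, hmin⟩ := hwf.has_min (Set.range x) ⟨x 0, 0, rfl⟩
  have hstab : ∀ n : ℕ, N ≤ n → x n = x N := fun n hn =>
    (hanti hn).eq_of_not_lt (hmin _ ⟨n, rfl⟩)
  refine ⟨N, hstab, hx0 ▸ hanti (Nat.zero_le N), fun i => ?_, fun y hy hfix => ?_⟩
  -- By fairness `f i` is applied at some time after stabilization, without effect.
  · obtain ⟨n, hn, rfl⟩ := hfair i N
    have h := hxs n
    rw [hstab n hn, hstab (n + 1) (by omega)] at h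
    exact h.symm
  -- By monotonicity a common fixpoint below the start stays below the whole run.
  · have hle : ∀ n, y ≤ x n := by
      intro n
      induction n with
      | zero => exact hx0 ▸ hy
      | succ k ih =>
        rw [hxs, ← hfix (s k)]
        exact hmono _ ih
    exact hle N
end

section
/- (Independence of the fair order of DRO activations.) Let L be a partial order in which < is well-founded, and let f : ι → L → L be a family of operators each of which is monotone and contracting. Let s and s' be two fair schedules, and let x and x' be the runs of f along s and s' respectively, both from the same start x₀. If x stabilizes at index N (x n = x N for all n ≥ N) and x' stabilizes at index M (x' n = x' M for all n ≥ M), then x N = x' M. -/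
/-!
The limit of a fair run is a common fixed point of all the operators, because each operator is
activated after stabilization, and it lies below the start, because the operators are contracting.
By monotonicity, a common fixed point below the start stays below every term of every run from
that start. Hence each of the two limits is below the other.
-/

theorem run_limit_fixed {L ι : Type*} {f : ι → L → L} {s : ℕ → ι}
    (hfair : ∀ i : ι, ∀ N : ℕ, ∃ n : ℕ, N ≤ n ∧ s n = i) {x : ℕ → L}
    (hxs : ∀ n, x (n + 1) = f (s n) (x n)) {N : ℕ}
    (hstab : ∀ n : ℕ, N ≤ n → x n = x N) (i : ι) : f i (x N) = x N := by
  obtain ⟨n, hn, rfl⟩ := hfair i N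
  have h := hxs n
  rw [hstab n hn, hstab (n + 1) (by omega)] at h
  exact h.symm

theorem run_le_start {L ι : Type*} [PartialOrder L] {f : ι → L → L}
    (hcontract : ∀ i, ∀ y : L, f i y ≤ y) {s : ℕ → ι} {x : ℕ → L}
    (hxs : ∀ n, x (n + 1) = f (s n) (x n)) (n : ℕ) : x n ≤ x 0 := by
  induction n with
  | zero => exact le_rfl
  | succ n ih => exact (hxs n).trans_le ((hcontract _ _).trans ih)

theorem fixed_le_run {L ι : Type*} [PartialOrder L] {f : ι → L → L}
    (hmono : ∀ i, Monotone (f i)) {s : ℕ → ι} {x : ℕ → L}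
    (hxs : ∀ n, x (n + 1) = f (s n) (x n)) {p : L} (hp : ∀ i, f i p = p)
    (h0 : p ≤ x 0) (n : ℕ) : p ≤ x n := by
  induction n with
  | zero => exact h0
  | succ n ih => rw [hxs n, ← hp (s n)]; exact hmono _ ih

/-- Independence of the fair order of DRO activations: two runs of the same
monotone contracting family along two fair schedules from the same start have
the same limit. -/
theorem fair_runs_same_limit {L : Type*} [PartialOrder L] {ι : Type*}
    (hwf : WellFounded ((· < ·) : L → L → Prop))
    (f : ι → L → L) (hmono : ∀ i, Monotone (f i))
    (hcontract : ∀ i, ∀ y : L, f i y ≤ y)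
    (s s' : ℕ → ι)
    (hfair : ∀ i : ι, ∀ N : ℕ, ∃ n : ℕ, N ≤ n ∧ s n = i)
    (hfair' : ∀ i : ι, ∀ N : ℕ, ∃ n : ℕ, N ≤ n ∧ s' n = i)
    (x₀ : L) (x x' : ℕ → L)
    (hx0 : x 0 = x₀) (hxs : ∀ n, x (n + 1) = f (s n) (x n))
    (hx'0 : x' 0 = x₀) (hx's : ∀ n, x' (n + 1) = f (s' n) (x' n))
    (N M : ℕ)
    (hstab : ∀ n : ℕ, N ≤ n → x n = x N)
    (hstab' : ∀ n : ℕ, M ≤ n → x' n = x' M) :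
    x N = x' M := by
  have h0 : x 0 = x' 0 := hx0.trans hx'0.symm
  apply le_antisymm
  · exact fixed_le_run hmono hx's (run_limit_fixed hfair hxs hstab)
      ((run_le_start hcontract hxs N).trans h0.le) M
  · exact fixed_le_run hmono hxs (run_limit_fixed hfair' hx's hstab')
      ((run_le_start hcontract hx's M).trans h0.ge) N
end

section
/- (Failure propagation, underlying Theorem 3.) Let L be a partial order with a least element ⊥ in which < is well-founded, and let f : ι → L → L be a family of operators each of which is monotone and contracting. Suppose there exists a fair schedule s such that the run x of f along s from x₀ attains ⊥, i.e., x k = ⊥ for some k. Then for every fair schedule s', the run x' of f along s' from x₀ stabilizes at ⊥: there exists N such that x' n = ⊥ for all n ≥ N. -/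
/-- Failure propagation: if one fair run of a monotone contracting family from
`x₀` attains `⊥`, then every fair run from `x₀` stabilizes at `⊥`. -/
theorem failure_propagation {L : Type*} [PartialOrder L] [OrderBot L] {ι : Type*}
    (hwf : WellFounded ((· < ·) : L → L → Prop))
    (f : ι → L → L) (hmono : ∀ i, Monotone (f i))
    (hcontract : ∀ i, ∀ y : L, f i y ≤ y)
    (x₀ : L)
    (hfail : ∃ (s : ℕ → ι) (x : ℕ → L),
      (∀ i : ι, ∀ N : ℕ, ∃ n : ℕ, N ≤ n ∧ s n = i) ∧
      x 0 = x₀ ∧ (∀ n, x (n + 1) = f (s n) (x n)) ∧ ∃ k : ℕ, x k = ⊥) :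
    ∀ (s' : ℕ → ι) (x' : ℕ → L),
      (∀ i : ι, ∀ N : ℕ, ∃ n : ℕ, N ≤ n ∧ s' n = i) →
      x' 0 = x₀ → (∀ n, x' (n + 1) = f (s' n) (x' n)) →
      ∃ N : ℕ, ∀ n : ℕ, N ≤ n → x' n = ⊥ := by
  obtain ⟨s, x, -, hx0, hx, k, hk⟩ := hfail
  intro s' x' hfair hx0' hx'
  have hanti : Antitone x' := antitone_nat_of_succ_le fun n => by
    rw [hx']; exact hcontract _ _
  -- The fair run `x'` eventually drops below each term of `x`: once it is below `x k`,
  have hbelow : ∀ k, ∃ N, x' N ≤ x k := by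
    intro k
    induction k with
    | zero => exact ⟨0, by rw [hx0, hx0']⟩
    | succ k ih =>
      obtain ⟨N, hN⟩ := ih
      obtain ⟨n, hn, hs⟩ := hfair (s k) N
      refine ⟨n + 1, ?_⟩
      rw [hx', hx, hs]
      exact hmono _ ((hanti hn).trans hN)
  obtain ⟨N, hN⟩ := hbelow k
  exact ⟨N, fun n hn => le_bot_iff.mp ((hanti hn).trans (hN.trans hk.le))⟩
end

section
/- (Order-theoretic form of Theorem 4.) Let L be a partial order in which < is well-founded, and let f : ι → L → L be a family of operators each of which is monotone and contracting (f i y ≤ y for all y). Let s be a fair schedule with f (s 0) x₀ = x₀, let x be the run of f along s from x₀, and let x' be the run of f along the shifted schedule fun n => s (n + 1) from x₀. Then both runs stabilize and have the same limit: there exist N and M such that x n = x N for all n ≥ N, x' n = x' M for all n ≥ M, and x N = x' M. -/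
/-- Order-theoretic form of Theorem 4: if the first operator of a fair
schedule is a no-op at the start `x₀`, then the run along the schedule and the
run along the schedule with its first element removed both stabilize and have
the same limit. -/
theorem remove_noop_head {L : Type*} [PartialOrder L] {ι : Type*}
    (hwf : WellFounded ((· < ·) : L → L → Prop))
    (f : ι → L → L) (hmono : ∀ i, Monotone (f i))
    (hcontract : ∀ i, ∀ y : L, f i y ≤ y)
    (s : ℕ → ι) (hfair : ∀ i : ι, ∀ N : ℕ, ∃ n : ℕ, N ≤ n ∧ s n = i)
    (x₀ : L) (hnoop : f (s 0) x₀ = x₀)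
    (x x' : ℕ → L)
    (hx0 : x 0 = x₀) (hxs : ∀ n, x (n + 1) = f (s n) (x n))
    (hx'0 : x' 0 = x₀) (hx's : ∀ n, x' (n + 1) = f (s (n + 1)) (x' n)) :
    ∃ N M : ℕ,
      (∀ n : ℕ, N ≤ n → x n = x N) ∧
      (∀ n : ℕ, M ≤ n → x' n = x' M) ∧
      x N = x' M := by
  -- Since the first step does nothing, the shifted run is the original run one step ahead.
  have hshift : ∀ n, x' n = x (n + 1) := by
    intro n
    induction n with
    | zero => rw [hx'0, hxs, hx0, hnoop]
    | succ k ih => rw [hx's, ih, hxs (k + 1)]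
  have hanti : Antitone x := antitone_nat_of_succ_le fun n => by
    rw [hxs]
    exact hcontract _ _
  -- The run is constant from the index at which it attains a minimal value.
  obtain ⟨_, ⟨N, rfl⟩, hmin⟩ := hwf.has_min (Set.range x) (Set.range_nonempty x)
  have hstab : ∀ n, N ≤ n → x n = x N := fun n hn =>
    (hanti hn).eq_of_not_lt (hmin _ ⟨n, rfl⟩)
  refine ⟨N, N, hstab, fun n hn => ?_, ?_⟩
  · rw [hshift, hshift, hstab _ (by omega), hstab (N + 1) (by omega)]
  · rw [hshift, hstab (N + 1) (by omega)]
end
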